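/- Let X = (S₁, S₂) be an ℝ≥0²-valued random vector with continuous joint density q, continuous marginal densities, E[S₁] < ∞, E[S₂] < ∞, E[S₁S₂] < ∞, and such that x ↦ ∫_0^∞ y q(x,y) dy and y ↦ ∫_0^∞ x q(x,y) dx are continuous. Define C(k₁,k₂) = E[(S₁-k₁)_+·(S₂-k₂)_+]. Then for all k₁,k₂ > 0, ∂⁴C/∂k₁∂k₂∂k₁∂k₂ (k₁,k₂) = q(k₁,k₂). -/

import Mathlib

/-!
Differentiating `C` once in each variable under the expectation turns each call payoff
`(S - k)₊` into `-1_{S > k}`: the payoff is 1-Lipschitz in `k`, and the kink `S = k` is a null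
event because the marginals have densities (`hasDerivAt_integral_call`). Hence `∂₂∂₁C` is the
survival function `P(S₁ > k₁, S₂ > k₂) = ∫_{k₁}^∞ ∫_{k₂}^∞ q(x, y) dy dx`.

The fundamental theorem of calculus then gives `-∫_{k₂}^∞ q(k₁, y) dy` and finally `q(k₁, k₂)`,
provided `x ↦ ∫_{k₂}^∞ q(x, y) dy` is continuous. This is where the continuity of the partial moment
`M(x) = ∫_0^∞ y q(x, y) dy` enters: `M` is locally bounded, so the tails
`∫_R^∞ q(x, y) dy ≤ M(x) / R` are locally uniformly small, and the integral is a locally uniform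
limit of the continuous functions `x ↦ ∫_{k₂}^R q(x, y) dy`. A point at which `y q(x, y)` is not
integrable would have `M(x) = 0` by convention; `moment_bound` excludes such points, since the bound
on `∫_0^R y q(x, y) dy` holds at almost every `x` and passes to every `x` by continuity.
-/

open MeasureTheory Set

/-- Partial derivative with respect to the first variable. -/
noncomputable def pd1 (f : ℝ → ℝ → ℝ) : ℝ → ℝ → ℝ := fun x y => deriv (fun t => f t y) x

/-- Partial derivative with respect to the second variable. -/
noncomputable def pd2 (f : ℝ → ℝ → ℝ) : ℝ → ℝ → ℝ := fun x y => deriv (fun t => f x t) y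

open Filter Topology

lemma hasDerivAt_integral_Ioi {f : ℝ → ℝ} {a x : ℝ} (hf : IntegrableOn f (Ioi a)) (hax : a < x)
    (hc : ContinuousAt f x) : HasDerivAt (fun k => ∫ u in Ioi k, f u) (-f x) x := by
  have hmeas : StronglyMeasurableAtFilter f (𝓝 x) :=
    ⟨Ioi a, Ioi_mem_nhds hax, hf.aestronglyMeasurable⟩
  have hii : IntervalIntegrable f volume a x :=
    (intervalIntegrable_iff_integrableOn_Ioc_of_le hax.le).2 (hf.mono_set Ioc_subset_Ioi_self)
  have h := (intervalIntegral.integral_hasDerivAt_right hii hmeas hc).const_sub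
    (∫ u in Ioi a, f u)
  refine h.congr_of_eventuallyEq ?_
  filter_upwards [Ioi_mem_nhds hax] with k hk
  rw [← intervalIntegral.integral_Ioi_sub_Ioi hf (le_of_lt hk)]
  ring

/-- The derivative in the strike of an expected call payoff on `X` weighted by `Y`: almost surely the
payoff is differentiable in the strike because `X` has no atom at `k`. -/
lemma hasDerivAt_integral_call {Ω : Type*} [MeasurableSpace Ω] {μ : Measure Ω} {X Y : Ω → ℝ}
    {k : ℝ} (hX : Measurable X) (hY : Integrable Y μ) (hk : ∀ᵐ ω ∂μ, X ω ≠ k)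
    (hXY : Integrable (fun ω => max (X ω - k) 0 * Y ω) μ) :
    HasDerivAt (fun k => ∫ ω, max (X ω - k) 0 * Y ω ∂μ)
      (∫ ω, (if k < X ω then -1 else 0) * Y ω ∂μ) k := by
  refine (hasDerivAt_integral_of_dominated_loc_of_lip (s := univ) (bound := Y)
    (F' := fun ω => (if k < X ω then (-1 : ℝ) else 0) * Y ω) univ_mem ?_ hXY ?_ ?_ hY ?_).2
  · exact Eventually.of_forall fun t =>
      ((hX.sub_const t).max measurable_const).aestronglyMeasurable.mul hY.aestronglyMeasurable
  · exact (Measurable.ite (measurableSet_lt measurable_const hX) measurable_const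
      measurable_const).aestronglyMeasurable.mul hY.aestronglyMeasurable
  · refine Eventually.of_forall fun ω => LipschitzWith.lipschitzOnWith ?_
    refine LipschitzWith.of_dist_le_mul fun s t => ?_
    have h1 : |max (X ω - s) 0 - max (X ω - t) 0| ≤ |s - t| := by
      refine (abs_max_sub_max_le_abs _ _ _).trans (le_of_eq ?_)
      rw [abs_sub_comm s t]; congr 1; ring
    rw [Real.dist_eq, Real.dist_eq, ← sub_mul, abs_mul, mul_comm, Real.coe_nnabs]
    gcongr
  · filter_upwards [hk] with ω hω
    refine HasDerivAt.mul_const ?_ _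
    rcases lt_or_gt_of_ne hω with h | h
    · rw [if_neg h.not_gt]
      refine (hasDerivAt_const k (0 : ℝ)).congr_of_eventuallyEq ?_
      filter_upwards [Ioi_mem_nhds h] with t ht
      exact max_eq_right (sub_nonpos.2 (le_of_lt ht))
    · rw [if_pos h]
      refine ((hasDerivAt_id k).const_sub (X ω)).congr_of_eventuallyEq ?_
      filter_upwards [Iio_mem_nhds h] with t ht
      exact max_eq_left (sub_nonneg.2 (le_of_lt ht))

/-- Near each `x₀ > 0` the moments `∫ y Q(x, y) dy` exist and are uniformly bounded. The continuity
hypothesis concerns the Bochner integral, which is `0` wherever the integrand is not integrable. -/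
lemma moment_bound {Q : ℝ → ℝ → ℝ} (hQ : Continuous (Function.uncurry Q)) (hQ0 : ∀ x y, 0 ≤ Q x y)
    (hint : ∀ᵐ x, x ∈ Ioi (0 : ℝ) → IntegrableOn (fun y => y * Q x y) (Ioi 0))
    (hM : ContinuousOn (fun x => ∫ y in Ioi (0 : ℝ), y * Q x y) (Ioi 0)) {x₀ : ℝ} (hx₀ : 0 < x₀) :
    ∃ B : ℝ, ∀ᶠ x in 𝓝 x₀, IntegrableOn (fun y => y * Q x y) (Ioi 0) ∧
      ∫ y in Ioi (0 : ℝ), y * Q x y ≤ B := by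
  set M := fun x => ∫ y in Ioi (0 : ℝ), y * Q x y with hMdef
  set B := M x₀ + 1
  have hMx : ContinuousAt M x₀ := hM.continuousAt (Ioi_mem_nhds hx₀)
  have hev : ∀ᶠ x in 𝓝 x₀, M x < B ∧ 0 < x :=
    (hMx.eventually (gt_mem_nhds (lt_add_one _))).and (Ioi_mem_nhds hx₀)
  refine ⟨B, ?_⟩
  obtain ⟨U, hU, hUo, hxU⟩ := eventually_nhds_iff.1 hev
  filter_upwards [hUo.mem_nhds hxU] with x hx
  refine ⟨?_, (hU x hx).1.le⟩
  have hcont : ∀ x, Continuous fun y => y * Q x y := fun x =>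
    continuous_id.mul (hQ.comp (Continuous.prodMk_right x))
  refine integrableOn_Ioi_of_intervalIntegral_norm_bounded (l := atTop) (b := id) B 0
    (fun i => ((hcont x).integrableOn_Icc).mono_set Ioc_subset_Icc_self) tendsto_id ?_
  filter_upwards [eventually_ge_atTop 0] with R hR
  have hh : Continuous fun x => ∫ y in (0 : ℝ)..R, ‖y * Q x y‖ := by
    refine intervalIntegral.continuous_parametric_intervalIntegral_of_continuous' ?_ 0 R
    exact (continuous_snd.mul hQ).norm
  by_contra! hlt
  -- The set of `x ∈ U` violating the bound is open and null, hence empty.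
  have hVo : IsOpen (U ∩ {x | B < ∫ y in (0 : ℝ)..R, ‖y * Q x y‖}) :=
    hUo.inter (isOpen_lt continuous_const hh)
  obtain ⟨z, ⟨hzU, hz⟩, hzi⟩ := (Measure.dense_of_ae hint).inter_open_nonempty _ hVo ⟨x, hx, hlt⟩
  refine absurd hz (not_lt.2 (le_trans ?_ (hU z hzU).1.le))
  rw [intervalIntegral.integral_of_le hR]
  have heq : ∫ y in Ioc (0 : ℝ) R, ‖y * Q z y‖ = ∫ y in Ioc (0 : ℝ) R, y * Q z y :=
    setIntegral_congr_fun measurableSet_Ioc fun y hy =>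
      Real.norm_of_nonneg (mul_nonneg hy.1.le (hQ0 _ _))
  rw [heq]
  refine setIntegral_mono_set (hzi (hU z hzU).2) ?_ Ioc_subset_Ioi_self.eventuallyLE
  filter_upwards [ae_restrict_mem measurableSet_Ioi] with y hy
  exact mul_nonneg (le_of_lt hy) (hQ0 _ _)

lemma integrableOn_tail {f : ℝ → ℝ} (hf : Continuous f) {t : ℝ} (ht : 0 < t)
    (hi : IntegrableOn (fun y => y * f y) (Ioi 0)) : IntegrableOn f (Ioi t) := by
  refine Integrable.mono' ((hi.mono_set (Ioi_subset_Ioi ht.le)).norm.const_mul t⁻¹)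
    hf.aestronglyMeasurable ?_
  filter_upwards [ae_restrict_mem measurableSet_Ioi] with y hy
  have hy' : t < y := hy
  rw [norm_mul, Real.norm_of_nonneg (ht.trans hy').le, ← mul_assoc]
  refine le_mul_of_one_le_left (norm_nonneg _) ?_
  rw [inv_mul_eq_div, one_le_div ht]
  exact hy'.le

/-- Markov's inequality for the measure `f(y) dy`. -/
lemma integral_tail_le {f : ℝ → ℝ} (hf : Continuous f) (hf0 : ∀ y, 0 ≤ f y) {R : ℝ} (hR : 0 < R)
    (hi : IntegrableOn (fun y => y * f y) (Ioi 0)) :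
    ∫ y in Ioi R, f y ≤ R⁻¹ * ∫ y in Ioi (0 : ℝ), y * f y := by
  have h1 : ∫ y in Ioi R, f y ≤ ∫ y in Ioi R, R⁻¹ * (y * f y) := by
    refine setIntegral_mono_on (integrableOn_tail hf hR hi)
      ((hi.mono_set (Ioi_subset_Ioi hR.le)).const_mul _) measurableSet_Ioi fun y hy => ?_
    have hy' : R < y := hy
    rw [← mul_assoc]
    refine le_mul_of_one_le_left (hf0 _) ?_
    rw [inv_mul_eq_div, one_le_div hR]
    exact hy'.le
  rw [integral_const_mul] at h1
  refine h1.trans (mul_le_mul_of_nonneg_left ?_ (inv_nonneg.2 hR.le))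
  refine setIntegral_mono_set hi ?_ (Ioi_subset_Ioi hR.le).eventuallyLE
  filter_upwards [ae_restrict_mem measurableSet_Ioi] with y hy
  exact mul_nonneg (le_of_lt hy) (hf0 _)

/-- The tail integrals `∫_t^∞ Q(x, y) dy` are locally uniform limits in `x` of integrals over compact
intervals, hence continuous. -/
lemma continuousAt_tail {Q : ℝ → ℝ → ℝ} (hQ : Continuous (Function.uncurry Q))
    (hQ0 : ∀ x y, 0 ≤ Q x y)
    (hint : ∀ᵐ x, x ∈ Ioi (0 : ℝ) → IntegrableOn (fun y => y * Q x y) (Ioi 0))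
    (hM : ContinuousOn (fun x => ∫ y in Ioi (0 : ℝ), y * Q x y) (Ioi 0)) {x₀ t : ℝ}
    (hx₀ : 0 < x₀) (ht : 0 < t) : ContinuousAt (fun x => ∫ y in Ioi t, Q x y) x₀ := by
  obtain ⟨B, hB⟩ := moment_bound hQ hQ0 hint hM hx₀
  have hc : ∀ x, Continuous (Q x) := fun x => hQ.comp (Continuous.prodMk_right x)
  refine continuousAt_of_locally_uniform_approx_of_continuousAt fun u hu => ?_
  obtain ⟨ε, hε, hεu⟩ := Metric.mem_uniformity_dist.1 hu
  have hlim : Tendsto (fun R : ℝ => R⁻¹ * B) atTop (𝓝 0) := by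
    simpa using tendsto_inv_atTop_zero.mul_const B
  obtain ⟨R, hRε, hRt⟩ := ((hlim.eventually (gt_mem_nhds hε)).and (eventually_ge_atTop t)).exists
  have hR : 0 < R := ht.trans_le hRt
  refine ⟨_, hB, fun x => ∫ y in t..R, Q x y,
    (intervalIntegral.continuous_parametric_intervalIntegral_of_continuous' hQ t R).continuousAt,
    fun x hx => hεu ?_⟩
  obtain ⟨hxi, hxB⟩ := hx
  beta_reduce
  rw [Real.dist_eq, ← intervalIntegral.integral_Ioi_sub_Ioi (integrableOn_tail (hc x) ht hxi) hRt,
    sub_sub_cancel, abs_of_nonneg (integral_nonneg fun y => hQ0 x y)]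
  exact ((integral_tail_le (hc x) (hQ0 x) hR hxi).trans
    (mul_le_mul_of_nonneg_left hxB (inv_nonneg.2 hR.le))).trans_lt hRε

theorem breeden_litzenberger_call_call
    {Ω : Type*} [MeasureSpace Ω] [IsProbabilityMeasure (volume : Measure Ω)]
    (S₁ S₂ : Ω → ℝ) (hm : Measurable fun ω => (S₁ ω, S₂ ω))
    (hS₁ : ∀ ω, 0 ≤ S₁ ω) (hS₂ : ∀ ω, 0 ≤ S₂ ω)
    (q : ℝ → ℝ → ℝ) (hq0 : ∀ x y, 0 ≤ q x y)
    (hqc : ContinuousOn (fun p : ℝ × ℝ => q p.1 p.2) (Set.Ici 0 ×ˢ Set.Ici 0))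
    (hlaw : Measure.map (fun ω => (S₁ ω, S₂ ω)) volume
      = volume.withDensity fun p : ℝ × ℝ => ENNReal.ofReal (q p.1 p.2))
    (q₁ q₂ : ℝ → ℝ)
    (hq₁c : ContinuousOn q₁ (Set.Ici 0)) (hq₂c : ContinuousOn q₂ (Set.Ici 0))
    (hlaw₁ : Measure.map S₁ volume = volume.withDensity fun x => ENNReal.ofReal (q₁ x))
    (hlaw₂ : Measure.map S₂ volume = volume.withDensity fun y => ENNReal.ofReal (q₂ y))
    (hmom₁ : Integrable S₁) (hmom₂ : Integrable S₂)
    (hmom₁₂ : Integrable fun ω => S₁ ω * S₂ ω)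
    (hpm₁ : ContinuousOn (fun y => ∫ x in Set.Ioi (0:ℝ), x * q x y) (Set.Ici 0))
    (hpm₂ : ContinuousOn (fun x => ∫ y in Set.Ioi (0:ℝ), y * q x y) (Set.Ici 0)) :
    ∀ k₁ k₂ : ℝ, 0 < k₁ → 0 < k₂ →
      (letI C : ℝ → ℝ → ℝ := fun k₁ k₂ => ∫ ω, max (S₁ ω - k₁) 0 * max (S₂ ω - k₂) 0
       pd2 (pd1 (pd2 (pd1 C))) k₁ k₂ = q k₁ k₂) := by
  intro k₁ k₂ hk₁ hk₂
  have hm₁ : Measurable S₁ := measurable_fst.comp hm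
  have hm₂ : Measurable S₂ := measurable_snd.comp hm
  have hna : ∀ (S : Ω → ℝ) (f : ℝ → ENNReal), Measurable S →
      Measure.map S volume = volume.withDensity f → ∀ k, ∀ᵐ ω, S ω ≠ k := by
    intro S f hS hl k
    have h0 : Measure.map S volume {k} = 0 := by
      rw [hl]; exact withDensity_absolutelyContinuous _ _ (Real.volume_singleton)
    rw [Measure.map_apply hS (measurableSet_singleton k)] at h0
    exact compl_mem_ae_iff.2 h0
  have hna₁ := hna S₁ _ hm₁ hlaw₁
  have hna₂ := hna S₂ _ hm₂ hlaw₂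
  have hcall₂ : ∀ t, Integrable fun ω => max (S₂ ω - t) 0 := fun t =>
    (hmom₂.sub (integrable_const t)).pos_part
  have hmax : ∀ s k : ℝ, 0 ≤ s → |max (s - k) 0| ≤ s + |k| := by
    intro s k hs
    rw [abs_of_nonneg (le_max_right _ _)]
    refine max_le ?_ (by positivity)
    linarith [neg_abs_le k]
  have hprod : ∀ k t, Integrable fun ω => max (S₁ ω - k) 0 * max (S₂ ω - t) 0 := by
    intro k t
    refine Integrable.mono' (g := fun ω => S₁ ω * S₂ ω + |t| * S₁ ω + |k| * S₂ ω + |k| * |t|)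
      (((hmom₁₂.add (hmom₁.const_mul _)).add (hmom₂.const_mul _)).add (integrable_const _))
      (((hm₁.sub_const k).max measurable_const).mul
        ((hm₂.sub_const t).max measurable_const)).aestronglyMeasurable ?_
    refine Eventually.of_forall fun ω => ?_
    rw [Real.norm_eq_abs, abs_mul]
    refine (mul_le_mul (hmax _ k (hS₁ ω)) (hmax _ t (hS₂ ω)) (abs_nonneg _)
      (add_nonneg (hS₁ ω) (abs_nonneg _))).trans (le_of_eq (by ring))
  -- `Q` extends the restriction of `q` to the closed quadrant continuously to the plane.
  set Q : ℝ → ℝ → ℝ := fun x y => q (max x 0) (max y 0) with hQdef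
  have hQc : Continuous (Function.uncurry Q) := by
    have : Continuous fun p : ℝ × ℝ => (max p.1 0, max p.2 0) := by fun_prop
    exact hqc.comp_continuous this fun p => ⟨le_max_right p.1 0, le_max_right p.2 0⟩
  have hQ0 : ∀ x y, 0 ≤ Q x y := fun x y => hq0 _ _
  have hQq : ∀ x y, 0 ≤ x → 0 ≤ y → Q x y = q x y := fun x y hx hy => by
    simp only [hQdef, max_eq_left hx, max_eq_left hy]
  set D : Set (ℝ × ℝ) := Ioi 0 ×ˢ Ioi 0 with hD
  have hDm : MeasurableSet D := measurableSet_Ioi.prod measurableSet_Ioi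
  have hQm : Measurable fun p : ℝ × ℝ => ENNReal.ofReal (Q p.1 p.2) :=
    (hQc.measurable).ennreal_ofReal
  have hres : (Measure.map (fun ω => (S₁ ω, S₂ ω)) volume).restrict D
      = (volume.restrict D).withDensity fun p => ENNReal.ofReal (Q p.1 p.2) := by
    rw [hlaw, restrict_withDensity hDm]
    refine withDensity_congr_ae ?_
    filter_upwards [ae_restrict_mem hDm] with p hp
    rw [hQq _ _ (le_of_lt hp.1) (le_of_lt hp.2)]
  have htr : ∀ g : ℝ × ℝ → ℝ, Measurable g → (Integrable fun ω => g (S₁ ω, S₂ ω)) →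
      IntegrableOn (fun p => Q p.1 p.2 * g p) D := by
    intro g hg hgi
    have h1 : Integrable g (Measure.map (fun ω => (S₁ ω, S₂ ω)) volume) :=
      (integrable_map_measure hg.aestronglyMeasurable hm.aemeasurable).2 hgi
    have h2 := h1.restrict (s := D)
    rw [hres, integrable_withDensity_iff_integrable_smul' hQm
      (Eventually.of_forall fun _ => ENNReal.ofReal_lt_top)] at h2
    refine h2.congr (Eventually.of_forall fun p => ?_)
    simp only [ENNReal.toReal_ofReal (hQ0 _ _), smul_eq_mul]
  have hQi : IntegrableOn (fun p : ℝ × ℝ => Q p.1 p.2) D := by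
    simpa using htr (fun _ => 1) measurable_const (integrable_const _)
  have hint : ∀ᵐ x, x ∈ Ioi (0 : ℝ) → IntegrableOn (fun y => y * Q x y) (Ioi 0) := by
    have h := htr Prod.snd measurable_snd hmom₂
    rw [IntegrableOn, hD, Measure.volume_eq_prod, ← Measure.prod_restrict] at h
    rw [← ae_restrict_iff' measurableSet_Ioi]
    filter_upwards [h.prod_right_ae] with x hx
    exact hx.congr (Eventually.of_forall fun y => mul_comm _ _)
  have hM : ContinuousOn (fun x => ∫ y in Ioi (0 : ℝ), y * Q x y) (Ioi 0) := by
    refine (hpm₂.mono Ioi_subset_Ici_self).congr fun x hx => ?_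
    refine setIntegral_congr_fun measurableSet_Ioi fun y hy => ?_
    simp only [hQq x y (le_of_lt hx) (le_of_lt hy)]
  -- the survival function in terms of the density
  have hG : ∀ k t : ℝ, 0 < k → 0 < t →
      ∫ ω, (if t < S₂ ω then (-1 : ℝ) else 0) * (if k < S₁ ω then -1 else 0)
        = ∫ x in Ioi k, ∫ y in Ioi t, Q x y := by
    intro k t hk ht
    have hsub : Ioi k ×ˢ Ioi t ⊆ D := prod_mono (Ioi_subset_Ioi hk.le) (Ioi_subset_Ioi ht.le)
    have hEm : MeasurableSet (Ioi k ×ˢ Ioi t) := measurableSet_Ioi.prod measurableSet_Ioi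
    have h1 : ∀ ω, (if t < S₂ ω then (-1 : ℝ) else 0) * (if k < S₁ ω then -1 else 0)
        = ((fun ω => (S₁ ω, S₂ ω)) ⁻¹' (Ioi k ×ˢ Ioi t)).indicator 1 ω := by
      intro ω
      by_cases ha : t < S₂ ω <;> by_cases hb : k < S₁ ω <;> simp [indicator, ha, hb]
    simp_rw [h1]
    rw [integral_indicator_one (hm hEm), measureReal_def, ← Measure.map_apply hm hEm,
      ← Measure.restrict_eq_self _ hsub, hres, withDensity_apply _ hEm,
      Measure.restrict_restrict_of_subset hsub]
    have hi := hQi.mono_set hsub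
    rw [← ofReal_integral_eq_lintegral_ofReal hi (Eventually.of_forall fun p => hQ0 _ _),
      ENNReal.toReal_ofReal (integral_nonneg fun p => hQ0 _ _), Measure.volume_eq_prod,
      setIntegral_prod _ (by simpa only [Measure.volume_eq_prod] using hi)]
  have hd1 : pd1 (fun k t => ∫ ω, max (S₁ ω - k) 0 * max (S₂ ω - t) 0)
      = fun k t => ∫ ω, max (S₂ ω - t) 0 * (if k < S₁ ω then -1 else 0) := by
    funext k t
    refine ((hasDerivAt_integral_call hm₁ (hcall₂ t) (hna₁ k) (hprod k t)).deriv).trans ?_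
    simp_rw [mul_comm]
  have hd2 : pd2 (fun k t => ∫ ω, max (S₂ ω - t) 0 * (if k < S₁ ω then -1 else 0))
      = fun k t => ∫ ω, (if t < S₂ ω then (-1 : ℝ) else 0) * (if k < S₁ ω then -1 else 0) := by
    funext k t
    have hYm : Measurable fun ω => if k < S₁ ω then (-1 : ℝ) else 0 :=
      Measurable.ite (measurableSet_lt measurable_const hm₁) measurable_const measurable_const
    have hYb : ∀ ω, ‖(if k < S₁ ω then (-1 : ℝ) else 0)‖ ≤ 1 := fun ω => by
      split_ifs <;> simp
    have hY : Integrable fun ω => if k < S₁ ω then (-1 : ℝ) else 0 :=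
      Integrable.of_bound hYm.aestronglyMeasurable 1 (Eventually.of_forall hYb)
    exact (hasDerivAt_integral_call hm₂ hY (hna₂ t)
      ((hcall₂ t).mul_bdd (c := 1) hYm.aestronglyMeasurable (Eventually.of_forall hYb))).deriv
  show pd2 (pd1 (pd2 (pd1 fun k t => ∫ ω, max (S₁ ω - k) 0 * max (S₂ ω - t) 0))) k₁ k₂ = q k₁ k₂
  rw [hd1, hd2]
  have hd3 : ∀ t, 0 < t →
      pd1 (fun k t => ∫ ω, (if t < S₂ ω then (-1 : ℝ) else 0) * (if k < S₁ ω then -1 else 0)) k₁ t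
        = -∫ y in Ioi t, Q k₁ y := by
    intro t ht
    have hi : IntegrableOn (fun x => ∫ y in Ioi t, Q x y) (Ioi 0) := by
      have h := hQi.mono_set (prod_mono (Subset.refl (Ioi (0 : ℝ))) (Ioi_subset_Ioi ht.le))
      rw [IntegrableOn, Measure.volume_eq_prod, ← Measure.prod_restrict] at h
      exact h.integral_prod_left
    refine HasDerivAt.deriv ((hasDerivAt_integral_Ioi hi hk₁
      (continuousAt_tail hQc hQ0 hint hM hk₁ ht)).congr_of_eventuallyEq ?_)
    filter_upwards [Ioi_mem_nhds hk₁] with k hk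
    exact hG k t hk ht
  obtain ⟨B, hB⟩ := moment_bound hQc hQ0 hint hM hk₁
  have hck : Continuous (Q k₁) := hQc.comp (Continuous.prodMk_right k₁)
  have hik : IntegrableOn (Q k₁) (Ioi (k₂ / 2)) :=
    integrableOn_tail hck (half_pos hk₂) hB.self_of_nhds.1
  have hfin := (hasDerivAt_integral_Ioi hik (half_lt_self hk₂) hck.continuousAt).neg
  rw [neg_neg, hQq _ _ hk₁.le hk₂.le] at hfin
  refine HasDerivAt.deriv (hfin.congr_of_eventuallyEq ?_)
  filter_upwards [Ioi_mem_nhds hk₂] with t ht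
  exact hd3 t ht
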